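/- arXiv:2603.25074 — 5 statements merged into one kernel-verified Lean document; each statement's English description precedes it below -/
import Mathlib

section
/- Fix vectors g, h in a real Hilbert space E with h ≠ 0, and a real number ε, and suppose ⟪g, h⟫ < −ε (the conflict case). Let λ* = (−⟪g, h⟫ − ε)/‖h‖² and d* = g + λ*·h. Then λ* > 0, the constraint is active at d*, i.e. ⟪h, d*⟫ = −ε, and d* maximizes the objective d ↦ ⟪g, d⟫ − ½‖d‖² over the feasible set {d ∈ E : ⟪h, d⟫ ≥ −ε}. -/
open RealInnerProductSpace

/-- Conflict case: if `⟪g, h⟫ < −ε` and `h ≠ 0`, then `λ* = (−⟪g,h⟫ − ε)/‖h‖² > 0`,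
the constraint is active at `d* = g + λ*•h`, i.e. `⟪h, d*⟫ = −ε`, and `d*` maximizes
`⟪g, d⟫ − ½‖d‖²` over the feasible set `{d : ⟪h, d⟫ ≥ −ε}`. -/
theorem conflict_optimal
    {E : Type*} [NormedAddCommGroup E] [InnerProductSpace ℝ E] [CompleteSpace E]
    (g h : E) (hh : h ≠ 0) (ε : ℝ) (hconf : ⟪g, h⟫ < -ε)
    (lamStar : ℝ) (hlam : lamStar = (-⟪g, h⟫ - ε) / ‖h‖ ^ 2)
    (dStar : E) (hd : dStar = g + lamStar • h) :
    0 < lamStar ∧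
      ⟪h, dStar⟫ = -ε ∧
      ∀ d : E, ⟪h, d⟫ ≥ -ε →
        ⟪g, d⟫ - (1 / 2) * ‖d‖ ^ 2 ≤ ⟪g, dStar⟫ - (1 / 2) * ‖dStar‖ ^ 2 := by
  have hpos : 0 < ‖h‖ ^ 2 := by positivity
  have hlam_pos : 0 < lamStar := by
    rw [hlam]
    exact div_pos (by linarith) hpos
  have hactive : ⟪h, dStar⟫ = -ε := by
    rw [hd, inner_add_right, real_inner_smul_right, real_inner_self_eq_norm_sq, hlam,
      div_mul_cancel₀ _ hpos.ne', real_inner_comm]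
    ring
  refine ⟨hlam_pos, hactive, fun d hfeas => ?_⟩
  have hg : g = dStar - lamStar • h := by rw [hd, add_sub_cancel_right]
  have hgx (x : E) : ⟪g, x⟫ = ⟪dStar, x⟫ - lamStar * ⟪h, x⟫ := by
    rw [hg, inner_sub_left, real_inner_smul_left]
  have hslack : 0 ≤ lamStar * (⟪h, d⟫ + ε) := mul_nonneg hlam_pos.le (by linarith)
  have hsq := norm_sub_sq_real dStar d
  rw [hgx d, hgx dStar, hactive, real_inner_self_eq_norm_sq]
  linarith [sq_nonneg ‖dStar - d‖]
end

section
/- Fix vectors g, h in a real Hilbert space E with h ≠ 0, and a real number ε, and suppose ⟪g, h⟫ < −ε. Let λ* = (−⟪g, h⟫ − ε)/‖h‖² and d* = g + λ*·h. Then strong duality holds: the value of the primal objective at the optimizer equals the value of the dual objective at λ*, i.e. ⟪g, d*⟫ − ½‖d*‖² = ½‖g + λ*·h‖² + λ*·ε. -/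
open RealInnerProductSpace

/-- Strong duality in the conflict case: with `λ* = (−⟪g,h⟫ − ε)/‖h‖²` and
`d* = g + λ*•h`, the primal value `⟪g, d*⟫ − ½‖d*‖²` equals the dual value
`½‖g + λ*•h‖² + λ*ε`. -/
theorem strong_duality
    {E : Type*} [NormedAddCommGroup E] [InnerProductSpace ℝ E] [CompleteSpace E]
    (g h : E) (hh : h ≠ 0) (ε : ℝ) (hconf : ⟪g, h⟫ < -ε)
    (lamStar : ℝ) (hlam : lamStar = (-⟪g, h⟫ - ε) / ‖h‖ ^ 2)
    (dStar : E) (hd : dStar = g + lamStar • h) :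
    ⟪g, dStar⟫ - (1 / 2) * ‖dStar‖ ^ 2
      = (1 / 2) * ‖g + lamStar • h‖ ^ 2 + lamStar * ε := by
  have hmul : lamStar * ‖h‖ ^ 2 = -⟪g, h⟫ - ε := by
    rw [hlam, div_mul_cancel₀ _ (pow_ne_zero 2 (norm_ne_zero_iff.mpr hh))]
  have hnorm : ‖g + lamStar • h‖ ^ 2
      = ‖g‖ ^ 2 + 2 * (lamStar * ⟪g, h⟫) + lamStar ^ 2 * ‖h‖ ^ 2 := by
    rw [norm_add_sq_real, real_inner_smul_right, norm_smul, mul_pow, Real.norm_eq_abs, sq_abs]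
  rw [hd, hnorm, inner_add_right, real_inner_smul_right, real_inner_self_eq_norm_sq]
  linear_combination -lamStar * hmul
end

section
/- Let f : E → ℝ be differentiable on a real Hilbert space E with G-Lipschitz gradient (G ≥ 0). Let α ≥ 0, ε ∈ ℝ, C ≥ 0, and let θ : ℕ → E and d : ℕ → E be sequences such that for every t, θ_{t+1} = θ_t − α·d_t, ⟪∇f(θ_t), d_t⟫ ≥ −ε, and ‖d_t‖ ≤ C. Then for every T ∈ ℕ, f(θ_T) − f(θ_0) ≤ T·(α·ε + (G·α²·C²)/2). -/
open RealInnerProductSpace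

/-- Descent lemma: a function with `G`-Lipschitz gradient lies below its quadratic upper model. -/
theorem le_quadratic_of_lipschitz_gradient
    {E : Type*} [NormedAddCommGroup E] [InnerProductSpace ℝ E] [CompleteSpace E]
    {f : E → ℝ} {f' : E → E} {G : ℝ}
    (hdiff : ∀ x, HasGradientAt f (f' x) x)
    (hlip : ∀ x y, ‖f' x - f' y‖ ≤ G * ‖x - y‖) (x v : E) :
    f (x + v) ≤ f x + ⟪f' x, v⟫ + G / 2 * ‖v‖ ^ 2 := by
  have hline (s : ℝ) : HasDerivAt (fun s : ℝ => f (x + s • v)) ⟪f' (x + s • v), v⟫ s := by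
    have hpath : HasDerivAt (fun s : ℝ => x + s • v) v s := by
      simpa using ((hasDerivAt_id s).smul_const v).const_add x
    simpa [Function.comp_def] using
      (hdiff (x + s • v)).hasFDerivAt.comp_hasDerivAt s hpath
  have hmodel (s : ℝ) : HasDerivAt
      (fun s : ℝ => f x + s * ⟪f' x, v⟫ + G / 2 * ‖v‖ ^ 2 * s ^ 2)
      (⟪f' x, v⟫ + G * ‖v‖ ^ 2 * s) s := by
    have h := (((hasDerivAt_id s).mul_const ⟪f' x, v⟫).const_add (f x)).add
      (((hasDerivAt_id s).pow 2).const_mul (G / 2 * ‖v‖ ^ 2))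
    refine h.congr_deriv ?_
    simp
    ring
  have hderiv_le : ∀ s ∈ Set.Ico (0 : ℝ) 1,
      ⟪f' (x + s • v), v⟫ ≤ ⟪f' x, v⟫ + G * ‖v‖ ^ 2 * s := by
    intro s hs
    have hgrad : ‖f' (x + s • v) - f' x‖ ≤ G * (s * ‖v‖) := by
      simpa [norm_smul, abs_of_nonneg hs.1] using hlip (x + s • v) x
    have hinner := real_inner_le_norm (f' (x + s • v) - f' x) v
    rw [inner_sub_left] at hinner
    nlinarith [mul_le_mul_of_nonneg_right hgrad (norm_nonneg v)]
  have h := image_le_of_deriv_right_le_deriv_boundary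
    (fun s _ => (hline s).continuousAt.continuousWithinAt)
    (fun s _ => (hline s).hasDerivWithinAt) (by simp)
    (fun s _ => (hmodel s).continuousAt.continuousWithinAt)
    (fun s _ => (hmodel s).hasDerivWithinAt) hderiv_le
    (Set.right_mem_Icc.2 zero_le_one)
  simpa using h

/-- Cumulative preservation-degradation bound: under the updates
`θ_{t+1} = θ_t − α•d_t` with `⟪∇f(θ_t), d_t⟫ ≥ −ε` and `‖d_t‖ ≤ C`, one has
`f(θ_T) − f(θ_0) ≤ T(αε + Gα²C²/2)` for every `T`. -/
theorem cumulative_preservation_bound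
    {E : Type*} [NormedAddCommGroup E] [InnerProductSpace ℝ E] [CompleteSpace E]
    (f : E → ℝ) (f' : E → E) (G : ℝ) (hG : 0 ≤ G)
    (hdiff : ∀ x, HasGradientAt f (f' x) x)
    (hlip : ∀ x y, ‖f' x - f' y‖ ≤ G * ‖x - y‖)
    (α : ℝ) (hα : 0 ≤ α) (ε C : ℝ) (hC : 0 ≤ C)
    (θ d : ℕ → E)
    (hupd : ∀ t, θ (t + 1) = θ t - α • d t)
    (hfeas : ∀ t, ⟪f' (θ t), d t⟫ ≥ -ε)
    (hbdd : ∀ t, ‖d t‖ ≤ C) :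
    ∀ T : ℕ, f (θ T) - f (θ 0) ≤ T * (α * ε + G * α ^ 2 * C ^ 2 / 2) := by
  intro T
  induction T with
  | zero => simp
  | succ t ih =>
    have hdescent := le_quadratic_of_lipschitz_gradient hdiff hlip (θ t) (-(α • d t))
    rw [← sub_eq_add_neg, ← hupd t, inner_neg_right, real_inner_smul_right, norm_neg,
      norm_smul, Real.norm_of_nonneg hα, mul_pow] at hdescent
    have hlinear := mul_le_mul_of_nonneg_left (hfeas t) hα
    have hquadratic : G / 2 * (α ^ 2 * ‖d t‖ ^ 2) ≤ G / 2 * (α ^ 2 * C ^ 2) := by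
      gcongr
      exact hbdd t
    push_cast
    linarith
end

section
/- Let f, g : E → ℝ be differentiable on a real Hilbert space E, each with G-Lipschitz gradient (G ≥ 0) and gradients uniformly bounded by L. Let D ≥ 0, ε ∈ ℝ, α ≥ 0, C ≥ 0, and let θ : ℕ → E and d : ℕ → E be sequences with θ_{t+1} = θ_t − α·d_t and ‖d_t‖ ≤ C for all t. Define the time-varying dual objective L_t(λ) = ½‖∇f(θ_t) + λ·∇g(θ_t)‖² + λ·ε. Then for every T ∈ ℕ, the total functional variation satisfies Σ_{t=0}^{T−1} sup_{λ ∈ [0, D]} |L_{t+1}(λ) − L_t(λ)| ≤ G·L·(1 + D)²·C·T·α. -/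
open RealInnerProductSpace

theorem norm_add_smul_le_mul_one_add {E : Type*} [SeminormedAddCommGroup E] [NormedSpace ℝ E]
    {u v : E} {K D c : ℝ} (hu : ‖u‖ ≤ K) (hv : ‖v‖ ≤ K) (hc : c ∈ Set.Icc 0 D) :
    ‖u + c • v‖ ≤ K * (1 + D) := by
  calc ‖u + c • v‖ ≤ ‖u‖ + c * ‖v‖ := by
        simpa [norm_smul, abs_of_nonneg hc.1] using norm_add_le u (c • v)
    _ ≤ K + D * K :=
        add_le_add hu (mul_le_mul hc.2 hv (norm_nonneg v) (hc.1.trans hc.2))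
    _ = K * (1 + D) := by ring

theorem abs_half_norm_sq_sub_half_norm_sq_le {E : Type*} [SeminormedAddCommGroup E]
    {a b : E} {M : ℝ} (ha : ‖a‖ ≤ M) (hb : ‖b‖ ≤ M) :
    |1 / 2 * ‖a‖ ^ 2 - 1 / 2 * ‖b‖ ^ 2| ≤ M * ‖a - b‖ := by
  have hfactor : 1 / 2 * ‖a‖ ^ 2 - 1 / 2 * ‖b‖ ^ 2 =
      (‖a‖ + ‖b‖) / 2 * (‖a‖ - ‖b‖) := by ring
  rw [hfactor, abs_mul, abs_of_nonneg (by positivity)]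
  exact mul_le_mul (by linarith) (abs_norm_sub_norm_le a b) (abs_nonneg _)
    ((norm_nonneg a).trans ha)

/-- Total Functional Variation (Lemma C.2): with updates `θ_{t+1} = θ_t − α•d_t`,
`‖d_t‖ ≤ C`, and the time-varying dual objective
`L_t(λ) = ½‖∇f(θ_t) + λ∇g(θ_t)‖² + λε`, the total variation
`Σ_{t<T} sup_{λ ∈ [0,D]} |L_{t+1}(λ) − L_t(λ)|` is at most `G·L·(1+D)²·C·T·α`. -/
theorem total_functional_variation
    {E : Type*} [NormedAddCommGroup E] [InnerProductSpace ℝ E] [CompleteSpace E]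
    (f g : E → ℝ) (f' g' : E → E) (G L : ℝ) (hG : 0 ≤ G)
    (hf : ∀ x, HasGradientAt f (f' x) x)
    (hg : ∀ x, HasGradientAt g (g' x) x)
    (hf_lip : ∀ x y, ‖f' x - f' y‖ ≤ G * ‖x - y‖)
    (hg_lip : ∀ x y, ‖g' x - g' y‖ ≤ G * ‖x - y‖)
    (hf_bdd : ∀ x, ‖f' x‖ ≤ L)
    (hg_bdd : ∀ x, ‖g' x‖ ≤ L)
    (D : ℝ) (hD : 0 ≤ D) (ε : ℝ) (α : ℝ) (hα : 0 ≤ α) (C : ℝ) (hC : 0 ≤ C)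
    (θ d : ℕ → E)
    (hupd : ∀ t, θ (t + 1) = θ t - α • d t)
    (hbdd : ∀ t, ‖d t‖ ≤ C)
    (Lt : ℕ → ℝ → ℝ)
    (hLt : ∀ t lam, Lt t lam = (1 / 2) * ‖f' (θ t) + lam • g' (θ t)‖ ^ 2 + lam * ε) :
    ∀ T : ℕ,
      ∑ t ∈ Finset.range T, (⨆ lam : Set.Icc (0 : ℝ) D, |Lt (t + 1) lam - Lt t lam|)
        ≤ G * L * (1 + D) ^ 2 * C * T * α := by
  intro T
  have hstep (t : ℕ) : (⨆ lam : Set.Icc (0 : ℝ) D, |Lt (t + 1) lam - Lt t lam|)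
      ≤ G * L * (1 + D) ^ 2 * C * α := by
    have : Nonempty (Set.Icc (0 : ℝ) D) := ⟨⟨0, le_rfl, hD⟩⟩
    refine ciSup_le fun ⟨lam, hlam⟩ => ?_
    have hL : 0 ≤ L := (norm_nonneg _).trans (hf_bdd 0)
    have hθ : G * ‖θ (t + 1) - θ t‖ ≤ G * (α * C) := by
      rw [hupd, sub_sub_cancel_left, norm_neg, norm_smul, Real.norm_of_nonneg hα]
      gcongr
      exact hbdd t
    have hdiff := norm_add_smul_le_mul_one_add
      ((hf_lip (θ (t + 1)) (θ t)).trans hθ) ((hg_lip (θ (t + 1)) (θ t)).trans hθ) hlam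
    rw [smul_sub, sub_add_sub_comm] at hdiff
    rw [hLt, hLt, add_sub_add_right_eq_sub]
    calc _ ≤ L * (1 + D) * _ := abs_half_norm_sq_sub_half_norm_sq_le
          (norm_add_smul_le_mul_one_add (hf_bdd _) (hg_bdd _) hlam)
          (norm_add_smul_le_mul_one_add (hf_bdd _) (hg_bdd _) hlam)
      _ ≤ L * (1 + D) * (G * (α * C) * (1 + D)) := by gcongr
      _ = G * L * (1 + D) ^ 2 * C * α := by ring
  calc _ ≤ ∑ _t ∈ Finset.range T, G * L * (1 + D) ^ 2 * C * α :=
        Finset.sum_le_sum fun t _ => hstep t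
    _ = G * L * (1 + D) ^ 2 * C * T * α := by
        rw [Finset.sum_const, Finset.card_range, nsmul_eq_mul]
        ring
end

section
/- Let f, g : E → ℝ be differentiable on a real Hilbert space E, each with G-Lipschitz gradient (G ≥ 0). Let D ≥ 0, let α > 0 satisfy c := 1 − α·G·(1 + D)/2 > 0, and let θ : ℕ → E and λ : ℕ → ℝ be sequences with 0 ≤ λ_t ≤ D for all t. Define d_t = ∇f(θ_t) + λ_t·∇g(θ_t) and suppose θ_{t+1} = θ_t − α·d_t for all t. Then for every T ≥ 1: c·α·Σ_{t=1}^{T} ‖d_t‖² ≤ (f(θ_1) + λ_1·g(θ_1)) − (f(θ_{T+1}) + λ_{T+1}·g(θ_{T+1})) + Σ_{t=1}^{T} (λ_{t+1} − λ_t)·g(θ_{t+1}). -/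
open RealInnerProductSpace

/-- Descent lemma: a function with `G`-Lipschitz gradient lies below its quadratic upper model. -/
theorem le_add_inner_add_of_lipschitz_gradient
    {E : Type*} [NormedAddCommGroup E] [InnerProductSpace ℝ E] [CompleteSpace E]
    {f : E → ℝ} {f' : E → E} {G : ℝ} (hf : ∀ x, HasGradientAt f (f' x) x)
    (hf_lip : ∀ x y, ‖f' x - f' y‖ ≤ G * ‖x - y‖) (x v : E) :
    f (x + v) ≤ f x + ⟪f' x, v⟫ + G / 2 * ‖v‖ ^ 2 := by
  have hline : ∀ s : ℝ, HasDerivAt (fun s : ℝ => f (x + s • v)) ⟪f' (x + s • v), v⟫ s := by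
    intro s
    have hs : HasDerivAt (fun s : ℝ => x + s • v) v s := by
      simpa using ((hasDerivAt_id s).smul_const v).const_add x
    simpa [Function.comp_def] using (hf (x + s • v)).hasFDerivAt.comp_hasDerivAt s hs
  have hmodel : ∀ s : ℝ, HasDerivAt
      (fun s : ℝ => f x + s * ⟪f' x, v⟫ + G / 2 * ‖v‖ ^ 2 * s ^ 2)
      (⟪f' x, v⟫ + G * s * ‖v‖ ^ 2) s := by
    intro s
    have h := (((hasDerivAt_id s).mul_const ⟪f' x, v⟫).const_add (f x)).add
      ((hasDerivAt_pow 2 s).const_mul (G / 2 * ‖v‖ ^ 2))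
    refine h.congr_deriv ?_
    norm_num
    ring
  have hle := image_le_of_deriv_right_le_deriv_boundary (a := 0) (b := 1)
    (fun s _ => (hline s).continuousAt.continuousWithinAt)
    (fun s _ => (hline s).hasDerivWithinAt) (by simp)
    (fun s _ => (hmodel s).continuousAt.continuousWithinAt)
    (fun s _ => (hmodel s).hasDerivWithinAt)
    (fun s hs => by
      have hinner : ⟪f' (x + s • v) - f' x, v⟫ ≤ G * s * ‖v‖ ^ 2 :=
        calc ⟪f' (x + s • v) - f' x, v⟫ ≤ ‖f' (x + s • v) - f' x‖ * ‖v‖ :=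
              real_inner_le_norm _ _
          _ ≤ G * ‖x + s • v - x‖ * ‖v‖ := by gcongr; exact hf_lip _ _
          _ = G * s * ‖v‖ ^ 2 := by
              rw [add_sub_cancel_left, norm_smul, Real.norm_of_nonneg hs.1]
              ring
      rw [inner_sub_left] at hinner
      linarith)
    (Set.right_mem_Icc.mpr zero_le_one)
  simpa using hle

/-- Summed descent inequality from the proof of Theorem C.4 (Pareto Stationarity):
with `d_t = ∇f(θ_t) + λ_t ∇g(θ_t)`, updates `θ_{t+1} = θ_t − α d_t`,
`0 ≤ λ_t ≤ D`, and `c = 1 − αG(1+D)/2 > 0`, one has for every `T ≥ 1`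
`cα Σ_{t=1}^T ‖d_t‖² ≤ J_1(θ_1) − J_{T+1}(θ_{T+1}) + Σ_{t=1}^T (λ_{t+1} − λ_t) g(θ_{t+1})`. -/
theorem summed_descent_inequality
    {E : Type*} [NormedAddCommGroup E] [InnerProductSpace ℝ E] [CompleteSpace E]
    (f g : E → ℝ) (f' g' : E → E) (G : ℝ) (hG : 0 ≤ G)
    (hf : ∀ x, HasGradientAt f (f' x) x)
    (hg : ∀ x, HasGradientAt g (g' x) x)
    (hf_lip : ∀ x y, ‖f' x - f' y‖ ≤ G * ‖x - y‖)
    (hg_lip : ∀ x y, ‖g' x - g' y‖ ≤ G * ‖x - y‖)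
    (D : ℝ) (hD : 0 ≤ D)
    (α c : ℝ) (hα : 0 < α) (hc : c = 1 - α * G * (1 + D) / 2) (hc_pos : 0 < c)
    (θ : ℕ → E) (lam : ℕ → ℝ)
    (hlam : ∀ t, lam t ∈ Set.Icc 0 D)
    (d : ℕ → E) (hd : ∀ t, d t = f' (θ t) + lam t • g' (θ t))
    (hupd : ∀ t, θ (t + 1) = θ t - α • d t) :
    ∀ T : ℕ, 1 ≤ T →
      c * α * ∑ t ∈ Finset.Icc 1 T, ‖d t‖ ^ 2
        ≤ (f (θ 1) + lam 1 * g (θ 1)) - (f (θ (T + 1)) + lam (T + 1) * g (θ (T + 1)))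
            + ∑ t ∈ Finset.Icc 1 T, (lam (t + 1) - lam t) * g (θ (t + 1)) := by
  have hstep : ∀ t, c * α * ‖d t‖ ^ 2 ≤
      (f (θ t) + lam t * g (θ t)) - (f (θ (t + 1)) + lam t * g (θ (t + 1))) := by
    intro t
    obtain ⟨hlam_nonneg, hlam_le⟩ := hlam t
    have hfd := le_add_inner_add_of_lipschitz_gradient hf hf_lip (θ t) (-(α • d t))
    have hgd := mul_le_mul_of_nonneg_left
      (le_add_inner_add_of_lipschitz_gradient hg hg_lip (θ t) (-(α • d t))) hlam_nonneg
    have hinner : ⟪f' (θ t), d t⟫ + lam t * ⟪g' (θ t), d t⟫ = ‖d t‖ ^ 2 := by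
      rw [← real_inner_smul_left, ← inner_add_left, ← hd, real_inner_self_eq_norm_sq]
    have hquad : α ^ 2 * G / 2 * ‖d t‖ ^ 2 * lam t ≤ α ^ 2 * G / 2 * ‖d t‖ ^ 2 * D := by
      gcongr
    rw [← sub_eq_add_neg, ← hupd, inner_neg_right, real_inner_smul_right, norm_neg, norm_smul,
      Real.norm_of_nonneg hα.le] at hfd hgd
    rw [hc]
    linear_combination hfd + hgd + hquad - α * hinner
  intro T _
  clear * - hstep
  induction T with
  | zero => simp
  | succ n ih =>
    rw [Finset.sum_Icc_succ_top (by omega), Finset.sum_Icc_succ_top (by omega)]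
    linarith [hstep (n + 1)]
end
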